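/- Let Ω ⊆ ℝ^d be a bounded open set, f : cl(Ω) → [0,∞) continuous, and g : ∂Ω → ℝ. Then there is at most one continuous function u : cl(Ω) → ℝ which is a viscosity solution of the Bellman equation H(D²u, f) = 0 in Ω (i.e. simultaneously a viscosity subsolution and supersolution, where for every φ ∈ C²(Ω) such that u − φ attains a local maximum (resp. minimum) at x ∈ Ω one has H(D²φ(x), f(x)) ≤ 0 (resp. ≥ 0)) and satisfies u = g pointwise on ∂Ω. -/

import Mathlib

open Matrix Set

/-- The set 𝐒₁ of positive semidefinite symmetric d×d real matrices with unit trace. -/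
def S1set (d : ℕ) : Set (Matrix (Fin d) (Fin d) ℝ) :=
  {B | B.PosSemidef ∧ B.trace = 1}

/-- The value −B:A + f·(det B)^(1/d) appearing under the supremum of the Bellman operator. -/
noncomputable def bval (d : ℕ) (A B : Matrix (Fin d) (Fin d) ℝ) (f : ℝ) : ℝ :=
  -((B * A).trace) + f * B.det ^ ((1 : ℝ) / d)

/-- The Bellman operator H(A,f) = sup_{B ∈ 𝐒₁} (−B:A + f·(det B)^(1/d)). -/
noncomputable def bellman (d : ℕ) (A : Matrix (Fin d) (Fin d) ℝ) (f : ℝ) : ℝ :=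
  sSup ((fun B => bval d A B f) '' S1set d)

/-- The Monge–Ampère operator M(A,f) = (f/d)^d − det A. -/
noncomputable def MAop (d : ℕ) (A : Matrix (Fin d) (Fin d) ℝ) (f : ℝ) : ℝ :=
  (f / d) ^ d - A.det

/-- The Hessian matrix D²φ(x) of φ : ℝ^d → ℝ at x. -/
noncomputable def hessianM (d : ℕ) (φ : (Fin d → ℝ) → ℝ) (x : Fin d → ℝ) :
    Matrix (Fin d) (Fin d) ℝ :=
  fun i j => iteratedFDeriv ℝ 2 φ x ![Pi.single i 1, Pi.single j 1]


section Helpers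

/-- Symmetric averaging (random walk) operator along the vectors `b k`. -/
noncomputable def Sop {d : ℕ} {F : Type*} [NormedAddCommGroup F] [NormedSpace ℝ F]
    (b : Fin d → (Fin d → ℝ)) (h : ℝ) :
    ((Fin d → ℝ) → F) →ₗ[ℝ] ((Fin d → ℝ) → F) where
  toFun g := fun x => (1 / (2 * d) : ℝ) • ∑ k, (g (x + h • b k) + g (x - h • b k))
  map_add' g g' := by
    funext x
    simp only [Pi.add_apply, ← smul_add, ← Finset.sum_add_distrib]
    congr 1
    apply Finset.sum_congr rfl
    intros; abel
  map_smul' c g := by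
    funext x
    simp only [Pi.smul_apply, RingHom.id_apply, ← smul_add, ← Finset.smul_sum]
    rw [smul_comm]

theorem Sop_apply {d : ℕ} {F : Type*} [NormedAddCommGroup F] [NormedSpace ℝ F]
    (b : Fin d → (Fin d → ℝ)) (h : ℝ) (g : (Fin d → ℝ) → F) (x : Fin d → ℝ) :
    Sop b h g x = (1 / (2 * d) : ℝ) • ∑ k, (g (x + h • b k) + g (x - h • b k)) := rfl

theorem Sop_const {d : ℕ} (hd : 0 < d) (b : Fin d → (Fin d → ℝ)) (h c : ℝ) :
    Sop b h (fun _ => c) = fun _ => c := by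
  funext x
  have : (d : ℝ) ≠ 0 := by positivity
  simp [Sop_apply]
  field_simp
  ring

theorem Sop_mono {d : ℕ} (b : Fin d → (Fin d → ℝ)) (h : ℝ) {g g' : (Fin d → ℝ) → ℝ}
    (hg : ∀ x, g x ≤ g' x) (x) : Sop b h g x ≤ Sop b h g' x := by
  simp only [Sop_apply, smul_eq_mul]
  gcongr <;> apply hg

theorem Spow_succ {d : ℕ} (b : Fin d → (Fin d → ℝ)) (h : ℝ) (n : ℕ) (g : (Fin d → ℝ) → ℝ) :
    ((Sop b h) ^ (n + 1)) g = Sop b h (((Sop b h) ^ n) g) := by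
  rw [pow_succ']; rfl

theorem Spow_succ' {d : ℕ} (b : Fin d → (Fin d → ℝ)) (h : ℝ) (n : ℕ) (g : (Fin d → ℝ) → ℝ) :
    ((Sop b h) ^ (n + 1)) g = ((Sop b h) ^ n) (Sop b h g) := by
  rw [pow_succ]; rfl

theorem Spow_const {d : ℕ} (hd : 0 < d) (b : Fin d → (Fin d → ℝ)) (h c : ℝ) (n : ℕ) :
    ((Sop b h) ^ n) (fun _ => c) = fun _ => c := by
  induction n with
  | zero => simp
  | succ n ih => rw [Spow_succ, ih, Sop_const hd]

theorem Spow_mono {d : ℕ} (b : Fin d → (Fin d → ℝ)) (h : ℝ) (n : ℕ) {g g' : (Fin d → ℝ) → ℝ}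
    (hg : ∀ x, g x ≤ g' x) (x) : ((Sop b h) ^ n) g x ≤ ((Sop b h) ^ n) g' x := by
  induction n generalizing x with
  | zero => simpa using hg x
  | succ n ih => rw [Spow_succ, Spow_succ]; exact Sop_mono b h ih x

theorem Spow_abs_le {d : ℕ} (hd : 0 < d) (b : Fin d → (Fin d → ℝ)) (h : ℝ) (n : ℕ)
    {g : (Fin d → ℝ) → ℝ} {c : ℝ}
    (hg : ∀ x, |g x| ≤ c) (x) : |((Sop b h) ^ n) g x| ≤ c := by
  rw [abs_le]
  constructor
  · have := Spow_mono b h n (g := fun _ => -c) (g' := g) (fun x => (abs_le.1 (hg x)).1) x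
    rwa [Spow_const hd] at this
  · have := Spow_mono b h n (g := g) (g' := fun _ => c) (fun x => (abs_le.1 (hg x)).2) x
    rwa [Spow_const hd] at this

/-- squared euclidean distance -/
noncomputable def qd {d : ℕ} (x y : Fin d → ℝ) : ℝ := ∑ i, (y i - x i) ^ 2

noncomputable def TT {d : ℕ} (b : Fin d → (Fin d → ℝ)) : ℝ := ∑ k, ∑ i, (b k i) ^ 2

theorem TT_nonneg {d : ℕ} (b : Fin d → (Fin d → ℝ)) : 0 ≤ TT b := by
  unfold TT; positivity

theorem qd_nonneg {d : ℕ} (x y : Fin d → ℝ) : 0 ≤ qd x y := by unfold qd; positivity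

theorem qd_self {d : ℕ} (x : Fin d → ℝ) : qd x x = 0 := by simp [qd]

theorem qd_ge {d : ℕ} (x y : Fin d → ℝ) {r : ℝ} (hr : 0 < r) (h : r ≤ dist y x) :
    r ^ 2 ≤ qd x y := by
  by_contra hc
  push Not at hc
  have : dist y x < r := by
    rw [dist_pi_lt_iff hr]
    intro i
    rw [Real.dist_eq]
    apply abs_lt_of_sq_lt_sq _ hr.le
    refine lt_of_le_of_lt ?_ hc
    exact Finset.single_le_sum (f := fun i => (y i - x i) ^ 2) (fun i _ => sq_nonneg _) (Finset.mem_univ i)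
  linarith

theorem Sop_qd {d : ℕ} (hd : 0 < d) (b : Fin d → (Fin d → ℝ)) (h c C : ℝ) (x : Fin d → ℝ) :
    Sop b h (fun y => c + C * qd x y)
      = fun y => (c + 2 * C * (h ^ 2 / (2 * d)) * TT b) + C * qd x y := by
  funext y
  have hd' : (d : ℝ) ≠ 0 := by positivity
  have key : ∀ k, qd x (y + h • b k) + qd x (y - h • b k)
      = 2 * qd x y + 2 * h ^ 2 * ∑ i, (b k i) ^ 2 := by
    intro k
    simp only [qd, Finset.mul_sum, ← Finset.sum_add_distrib]
    apply Finset.sum_congr rfl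
    intro i _
    simp
    ring
  have : ∀ k, (c + C * qd x (y + h • b k) + (c + C * qd x (y - h • b k)))
     = (2 * c + 2 * C * qd x y) + (2 * C * h ^ 2) * ∑ i, (b k i) ^ 2 := by
    intro k
    linear_combination C * key k
  simp only [Sop_apply, smul_eq_mul, this, Finset.sum_add_distrib, ← Finset.mul_sum, TT]
  simp
  field_simp
  ring

theorem Spow_qd {d : ℕ} (hd : 0 < d) (b : Fin d → (Fin d → ℝ)) (h c C : ℝ) (x : Fin d → ℝ) (n : ℕ) :
    ((Sop b h) ^ n) (fun y => c + C * qd x y)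
      = fun y => (c + 2 * C * (n * (h ^ 2 / (2 * d))) * TT b) + C * qd x y := by
  induction n with
  | zero => simp
  | succ n ih =>
    rw [Spow_succ, ih, Sop_qd hd]
    funext y
    push_cast
    ring

theorem cs_bdd {d : ℕ} {g : (Fin d → ℝ) → ℝ} (hg : Continuous g) (hs : HasCompactSupport g) :
    ∃ M, 0 < M ∧ ∀ x, |g x| ≤ M := by
  obtain ⟨C, hC⟩ := hs.exists_bound_of_continuous hg
  exact ⟨|C| + 1, by positivity, fun x => (hC x).trans (by linarith [le_abs_self C])⟩

theorem cs_uc {d : ℕ} {F : Type*} [NormedAddCommGroup F] {g : (Fin d → ℝ) → F}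
    (hg : Continuous g) (hs : HasCompactSupport g) :
    UniformContinuous g :=
  hg.uniformContinuous_of_tendsto_cocompact hs.is_zero_at_infty

/-- strong continuity -/
theorem lemA {d : ℕ} (hd : 0 < d) (b : Fin d → (Fin d → ℝ)) {g : (Fin d → ℝ) → ℝ}
    (hg : Continuous g) (hs : HasCompactSupport g) {e : ℝ} (he : 0 < e) :
    ∃ t₀ > 0, ∀ h : ℝ, ∀ n : ℕ, n * (h ^ 2 / (2 * d)) ≤ t₀ → ∀ x,
      |((Sop b h) ^ n) g x - g x| ≤ e := by
  obtain ⟨M, hM0, hM⟩ := cs_bdd hg hs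
  obtain ⟨δ, hδ, hu⟩ := Metric.uniformContinuous_iff.1 (cs_uc hg hs) (e / 2) (by positivity)
  set C := 2 * M / δ ^ 2 with hC
  have hC0 : 0 < C := by positivity
  have hT := TT_nonneg b
  have hq : ∀ x y, |g y - g x| ≤ e / 2 + C * qd x y := by
    intro x y
    by_cases hxy : dist y x < δ
    · have h1 := hu hxy
      rw [Real.dist_eq] at h1
      have := mul_nonneg hC0.le (qd_nonneg x y)
      linarith
    · have h2 := qd_ge x y hδ (not_lt.1 hxy)
      have h3 : C * δ ^ 2 ≤ C * qd x y := by gcongr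
      have h4 : C * δ ^ 2 = 2 * M := by rw [hC]; field_simp
      have h5 : |g y - g x| ≤ |g y| + |g x| := abs_sub _ _
      linarith [hM x, hM y]
  refine ⟨e / (4 * C * (TT b + 1)), by positivity, ?_⟩
  intro h n hn x
  have hb : 2 * C * (n * (h ^ 2 / (2 * d))) * TT b ≤ e / 2 := by
    calc 2 * C * (n * (h ^ 2 / (2 * d))) * TT b ≤ 2 * C * (e / (4 * C * (TT b + 1))) * (TT b + 1) := by
          gcongr
          linarith
      _ = e / 2 := by field_simp; norm_num
  have hup := Spow_mono b h n (g := g) (g' := fun y => (g x + e / 2) + C * qd x y)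
    (fun y => by linarith [(abs_le.1 (hq x y)).2]) x
  have hlo := Spow_mono b h n (g' := g) (g := fun y => (g x - e / 2) + (-C) * qd x y)
    (fun y => by linarith [(abs_le.1 (hq x y)).1]) x
  rw [Spow_qd hd] at hup hlo
  simp only [qd_self] at hup hlo
  rw [abs_le]
  constructor <;> linarith

/-! second derivatives -/

theorem fderiv_Sop {d : ℕ} {F : Type*} [NormedAddCommGroup F] [NormedSpace ℝ F]
    (b : Fin d → (Fin d → ℝ)) (h : ℝ) {g : (Fin d → ℝ) → F} (hg : Differentiable ℝ g) :
    fderiv ℝ (Sop b h g) = Sop b h (fderiv ℝ g) := by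
  funext x
  have : HasFDerivAt (fun x => (1 / (2 * d) : ℝ) • ∑ k, (g (x + h • b k) + g (x - h • b k)))
     ((1 / (2 * d) : ℝ) • ∑ k, (fderiv ℝ g (x + h • b k) + fderiv ℝ g (x - h • b k))) x := by
    apply HasFDerivAt.const_smul
    apply HasFDerivAt.fun_sum
    intro k _
    apply HasFDerivAt.add
    · exact (hg (x + h • b k)).hasFDerivAt.comp x ((hasFDerivAt_id x).add_const (h • b k))
    · exact (hg (x - h • b k)).hasFDerivAt.comp x ((hasFDerivAt_id x).sub_const (h • b k))
  exact this.fderiv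

/-- The operator `∑ₖ D²φ(bₖ,bₖ)`. -/
noncomputable def Lop {d : ℕ} (b : Fin d → (Fin d → ℝ)) (φ : (Fin d → ℝ) → ℝ) (x : Fin d → ℝ) : ℝ :=
  ∑ k, fderiv ℝ (fderiv ℝ φ) x (b k) (b k)

theorem contDiff_Sop {d : ℕ} (b : Fin d → (Fin d → ℝ)) (h : ℝ) {g : (Fin d → ℝ) → ℝ}
    (hg : ContDiff ℝ 2 g) : ContDiff ℝ 2 (Sop b h g) := by
  change ContDiff ℝ 2 (fun x => (1 / (2 * d) : ℝ) • ∑ k, (g (x + h • b k) + g (x - h • b k)))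
  fun_prop

theorem contDiff_Spow {d : ℕ} (b : Fin d → (Fin d → ℝ)) (h : ℝ) {g : (Fin d → ℝ) → ℝ}
    (hg : ContDiff ℝ 2 g) (n : ℕ) : ContDiff ℝ 2 (((Sop b h) ^ n) g) := by
  induction n with
  | zero => simpa using hg
  | succ n ih => rw [Spow_succ]; exact contDiff_Sop b h ih

theorem diff1 {d : ℕ} {g : (Fin d → ℝ) → ℝ} (hg : ContDiff ℝ 2 g) :
    ContDiff ℝ 1 (fderiv ℝ g) := hg.fderiv_right (by norm_num)

theorem Lop_Sop {d : ℕ} (b : Fin d → (Fin d → ℝ)) (h : ℝ) {g : (Fin d → ℝ) → ℝ}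
    (hg : ContDiff ℝ 2 g) : Lop b (Sop b h g) = Sop b h (Lop b g) := by
  funext x
  unfold Lop
  rw [fderiv_Sop b h (hg.differentiable (by norm_num)),
    fderiv_Sop b h ((diff1 hg).differentiable (by norm_num))]
  simp only [Sop_apply, _root_.smul_apply, _root_.sum_apply,
    _root_.add_apply, ← Finset.smul_sum, ← Finset.sum_add_distrib]
  rw [Finset.sum_comm]

theorem Lop_Spow {d : ℕ} (b : Fin d → (Fin d → ℝ)) (h : ℝ) {g : (Fin d → ℝ) → ℝ}
    (hg : ContDiff ℝ 2 g) (n : ℕ) : Lop b (((Sop b h) ^ n) g) = ((Sop b h) ^ n) (Lop b g) := by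
  induction n with
  | zero => simp
  | succ n ih => rw [Spow_succ, Lop_Sop b h (contDiff_Spow b h hg n), ih, Spow_succ]

theorem Lop_cont {d : ℕ} (b : Fin d → (Fin d → ℝ)) {g : (Fin d → ℝ) → ℝ}
    (hg : ContDiff ℝ 2 g) : Continuous (Lop b g) := by
  have h2 : Continuous (fderiv ℝ (fderiv ℝ g)) := (diff1 hg).continuous_fderiv (by norm_num)
  unfold Lop
  fun_prop

theorem Lop_supp {d : ℕ} (b : Fin d → (Fin d → ℝ)) {g : (Fin d → ℝ) → ℝ}
    (hs : HasCompactSupport g) : HasCompactSupport (Lop b g) := by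
  have := (hs.fderiv ℝ).fderiv ℝ
  exact this.comp_left (g := fun A : (Fin d → ℝ) →L[ℝ] (Fin d → ℝ) →L[ℝ] ℝ => ∑ k, A (b k) (b k)) (by simp)

theorem consist1 {d : ℕ} {φ : (Fin d → ℝ) → ℝ} (hφ : ContDiff ℝ 2 φ) (hs : HasCompactSupport φ)
    (v : Fin d → ℝ) {e : ℝ} (he : 0 < e) :
    ∃ h₀ > 0, ∀ h : ℝ, 0 < h → h < h₀ → ∀ x,
      |φ (x + h • v) + φ (x - h • v) - 2 * φ x - h ^ 2 * fderiv ℝ (fderiv ℝ φ) x v v| ≤ h ^ 2 * e := by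
  have hc : Continuous (fderiv ℝ (fderiv ℝ φ)) := (diff1 hφ).continuous_fderiv (by norm_num)
  have hc2 : Continuous (fun x => fderiv ℝ (fderiv ℝ φ) x v v) := by fun_prop
  have hs2 : HasCompactSupport (fun x => fderiv ℝ (fderiv ℝ φ) x v v) :=
    ((hs.fderiv ℝ).fderiv ℝ).comp_left (g := fun A : (Fin d → ℝ) →L[ℝ] (Fin d → ℝ) →L[ℝ] ℝ => A v v) (by simp)
  obtain ⟨δ, hδ, hu⟩ := Metric.uniformContinuous_iff.1 (cs_uc hc2 hs2) (e / 2) (by positivity)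
  refine ⟨δ / (‖v‖ + 1), by positivity, ?_⟩
  intro h h0 hh x
  have hsmall : ∀ s ∈ Icc (0 : ℝ) h, ‖s • v‖ < δ := by
    intro s hs
    rw [norm_smul, Real.norm_eq_abs, abs_of_nonneg hs.1]
    calc s * ‖v‖ ≤ h * (‖v‖ + 1) := by
            have := hs.2
            gcongr
            linarith
      _ < δ := by rwa [lt_div_iff₀ (by positivity)] at hh
  set D := fderiv ℝ (fderiv ℝ φ) x v v with hD
  have l1 : ∀ s : ℝ, HasDerivAt (fun s : ℝ => x + s • v) v s := fun s => by
    simpa using ((hasDerivAt_id s).smul_const v).const_add x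
  have l2 : ∀ s : ℝ, HasDerivAt (fun s : ℝ => x - s • v) (-v) s := fun s => by
    simpa using ((hasDerivAt_id s).smul_const v).const_sub x
  have d1 : Differentiable ℝ φ := hφ.differentiable (by norm_num)
  have d2 : Differentiable ℝ (fderiv ℝ φ) := (diff1 hφ).differentiable (by norm_num)
  have d3 : ∀ y, HasFDerivAt (fun y => fderiv ℝ φ y v) ((fderiv ℝ (fderiv ℝ φ) y).flip v) y := by
    intro y
    exact ((ContinuousLinearMap.apply ℝ ℝ v).hasFDerivAt (x := fderiv ℝ φ y)).comp y (d2 y).hasFDerivAt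
  have H : ∀ s : ℝ, HasDerivAt (fun s : ℝ => fderiv ℝ φ (x + s • v) v - fderiv ℝ φ (x - s • v) v - 2 * s * D)
      (fderiv ℝ (fderiv ℝ φ) (x + s • v) v v + fderiv ℝ (fderiv ℝ φ) (x - s • v) v v - 2 * D) s := by
    intro s
    have a1 := (d3 (x + s • v)).comp_hasDerivAt s (l1 s)
    have a2 := (d3 (x - s • v)).comp_hasDerivAt s (l2 s)
    have a3 : HasDerivAt (fun s : ℝ => 2 * s * D) (2 * D) s := by
      simpa using ((hasDerivAt_id s).const_mul 2).mul_const D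
    refine ((a1.sub a2).sub a3).congr_deriv ?_
    simp
  have G : ∀ s : ℝ, HasDerivAt (fun s : ℝ => φ (x + s • v) + φ (x - s • v) - 2 * φ x - s ^ 2 * D)
      (fderiv ℝ φ (x + s • v) v - fderiv ℝ φ (x - s • v) v - 2 * s * D) s := by
    intro s
    have a1 := ((d1 (x + s • v)).hasFDerivAt.comp_hasDerivAt s (l1 s))
    have a2 := ((d1 (x - s • v)).hasFDerivAt.comp_hasDerivAt s (l2 s))
    have a3 : HasDerivAt (fun s : ℝ => s ^ 2 * D) (2 * s * D) s := by
      simpa using (hasDerivAt_pow 2 s).mul_const D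
    refine (((a1.add a2).sub_const (2 * φ x)).sub a3).congr_deriv ?_
    simp
    ring
  have bH : ∀ s ∈ Icc (0 : ℝ) h, ‖fderiv ℝ φ (x + s • v) v - fderiv ℝ φ (x - s • v) v - 2 * s * D‖ ≤ e * h := by
    intro s hs
    have := Convex.norm_image_sub_le_of_norm_hasDerivWithin_le (s := Icc (0 : ℝ) h) (C := e) (x := 0) (y := s)
      (fun s _ => (H s).hasDerivWithinAt) (fun s hs => by
        have b1 : dist (x + s • v) x < δ := by simpa [dist_eq_norm] using hsmall s hs
        have b2 : dist (x - s • v) x < δ := by simpa [dist_eq_norm] using hsmall s hs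
        have c1 := hu b1
        have c2 := hu b2
        rw [Real.dist_eq, abs_lt] at c1 c2
        rw [Real.norm_eq_abs, abs_le]
        constructor <;> linarith [c1.1, c1.2, c2.1, c2.2]) (convex_Icc _ _) ⟨le_rfl, h0.le⟩ hs
    simp only [zero_smul, add_zero, sub_zero, sub_self, mul_zero, zero_mul] at this
    refine this.trans ?_
    rw [Real.norm_eq_abs, abs_of_nonneg hs.1]
    have := hs.2
    gcongr
  have := Convex.norm_image_sub_le_of_norm_hasDerivWithin_le (s := Icc (0 : ℝ) h) (C := e * h) (x := 0) (y := h)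
      (fun s _ => (G s).hasDerivWithinAt) bH (convex_Icc _ _) ⟨le_rfl, h0.le⟩ ⟨h0.le, le_rfl⟩
  simp only [zero_smul, add_zero, sub_zero, Real.norm_eq_abs, abs_of_pos h0] at this
  have e1 : φ x + φ x - 2 * φ x - 0 ^ 2 * D = 0 := by ring
  rw [e1, sub_zero] at this
  linarith

theorem consist {d : ℕ} (hd : 0 < d) (b : Fin d → (Fin d → ℝ)) {φ : (Fin d → ℝ) → ℝ}
    (hφ : ContDiff ℝ 2 φ) (hs : HasCompactSupport φ) {e : ℝ} (he : 0 < e) :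
    ∃ h₀ > 0, ∀ h : ℝ, 0 < h → h < h₀ → ∀ x,
      |Sop b h φ x - φ x - (h ^ 2 / (2 * d)) * Lop b φ x| ≤ (h ^ 2 / (2 * d)) * e := by
  have hd' : (0 : ℝ) < d := by positivity
  choose H hH0 hH using fun k => consist1 hφ hs (b k) (e := e / d) (by positivity)
  have : Nonempty (Fin d) := ⟨⟨0, hd⟩⟩
  refine ⟨Finset.univ.inf' Finset.univ_nonempty H, ?_, ?_⟩
  · simp [hH0]
  intro h h0 hh x
  have e1 : Sop b h φ x - φ x - (h ^ 2 / (2 * d)) * Lop b φ x = (1 / (2 * d)) * ∑ k,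
      (φ (x + h • b k) + φ (x - h • b k) - 2 * φ x - h ^ 2 * fderiv ℝ (fderiv ℝ φ) x (b k) (b k)) := by
    simp only [Sop_apply, Lop, smul_eq_mul, Finset.sum_sub_distrib, ← Finset.mul_sum]
    simp
    field_simp
  rw [e1, abs_mul, abs_of_pos (by positivity)]
  calc _ ≤ (1 / (2 * d : ℝ)) * ∑ k : Fin d, h ^ 2 * (e / d) := by
        gcongr
        refine (Finset.abs_sum_le_sum_abs _ _).trans ?_
        apply Finset.sum_le_sum
        intro k _
        exact hH k h h0 (hh.trans_le (Finset.inf'_le _ (Finset.mem_univ k))) x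
    _ = _ := by simp; field_simp

theorem consist2 {d : ℕ} (hd : 0 < d) (b : Fin d → (Fin d → ℝ)) {φ : (Fin d → ℝ) → ℝ}
    (hφ : ContDiff ℝ 2 φ) (hs : HasCompactSupport φ) {e : ℝ} (he : 0 < e) :
    ∃ h₀ > 0, ∀ h : ℝ, 0 < h → h < h₀ → ∀ x,
      |Sop b h φ x - φ x - (h ^ 2 / (2 * d)) * Sop b h (Lop b φ) x| ≤ (h ^ 2 / (2 * d)) * e := by
  have hd' : (1 : ℝ) ≤ d := by exact_mod_cast hd
  obtain ⟨h₁, h₁0, H1⟩ := consist hd b hφ hs (half_pos he)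
  obtain ⟨t₀, t0, H2⟩ := lemA hd b (Lop_cont b hφ) (Lop_supp b hs) (half_pos he)
  refine ⟨min h₁ (min 1 t₀), by positivity, ?_⟩
  intro h h0 hh x
  have hh1 : h < h₁ := hh.trans_le (min_le_left _ _)
  have hh2 : h < 1 := hh.trans_le ((min_le_right _ _).trans (min_le_left _ _))
  have hh3 : h < t₀ := hh.trans_le ((min_le_right _ _).trans (min_le_right _ _))
  have a1 := H1 h h0 hh1 x
  have hτ : h ^ 2 / (2 * d) ≤ h := by
    rw [div_le_iff₀ (by positivity)]
    nlinarith
  have a2 := H2 h 1 (by push_cast; linarith) x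
  rw [pow_one] at a2
  set τ := h ^ 2 / (2 * (d : ℝ)) with hτd
  have τ0 : 0 ≤ τ := by positivity
  have a3 : |τ * (Sop b h (Lop b φ) x - Lop b φ x)| ≤ τ * (e / 2) := by
    rw [abs_mul, abs_of_nonneg τ0]; gcongr
  rw [abs_le] at a1 a3 ⊢
  constructor <;> nlinarith [a1.1, a1.2, a3.1, a3.2]

noncomputable def Dq (d : ℕ) : (Fin d → ℝ) →L[ℝ] (Fin d → ℝ) →L[ℝ] ℝ :=
  ∑ i, (2 : ℝ) • (ContinuousLinearMap.proj (R := ℝ) (φ := fun _ : Fin d => ℝ) i).smulRight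
    (ContinuousLinearMap.proj (R := ℝ) (φ := fun _ : Fin d => ℝ) i)

theorem Dq_apply {d : ℕ} (v w : Fin d → ℝ) : Dq d v w = ∑ i, 2 * (v i * w i) := by
  simp [Dq, _root_.sum_apply]

theorem contDiff_qd {d : ℕ} (x : Fin d → ℝ) : ContDiff ℝ 2 (qd x) := by
  unfold qd
  fun_prop

theorem fderiv_qd {d : ℕ} (x : Fin d → ℝ) : fderiv ℝ (qd x) = fun y => Dq d (y - x) := by
  funext y
  have : HasFDerivAt (fun y => ∑ i, (y i - x i) ^ 2)
      (∑ i, (2 * (y i - x i)) • ContinuousLinearMap.proj (R := ℝ) (φ := fun _ : Fin d => ℝ) i) y := by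
    apply HasFDerivAt.fun_sum
    intro i _
    have h1 : HasFDerivAt (fun y : Fin d → ℝ => y i - x i)
      (ContinuousLinearMap.proj (R := ℝ) (φ := fun _ : Fin d => ℝ) i) y :=
      (ContinuousLinearMap.proj (R := ℝ) (φ := fun _ : Fin d => ℝ) i).hasFDerivAt.sub_const _
    simpa using h1.pow 2
  refine this.fderiv.trans ?_
  ext w
  rw [Dq_apply]
  simp [_root_.sum_apply, mul_assoc]

theorem fderiv2_qd {d : ℕ} (x y : Fin d → ℝ) : fderiv ℝ (fderiv ℝ (qd x)) y = Dq d := by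
  rw [fderiv_qd]
  exact ((Dq d).hasFDerivAt.comp y ((hasFDerivAt_id y).sub_const x)).fderiv

theorem Lop_qd {d : ℕ} (b : Fin d → (Fin d → ℝ)) {φ : (Fin d → ℝ) → ℝ} (hφ : ContDiff ℝ 2 φ)
    (C : ℝ) (x y : Fin d → ℝ) :
    Lop b (fun y => φ y + C * qd x y) y = Lop b φ y + 2 * C * TT b := by
  have e1 : fderiv ℝ (fun y => φ y + C * qd x y) = fun y => fderiv ℝ φ y + C • fderiv ℝ (qd x) y := by
    funext y
    exact (((hφ.differentiable (by norm_num)) y).hasFDerivAt.add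
      ((((contDiff_qd x).differentiable (by norm_num)) y).hasFDerivAt.const_mul C)).fderiv
  have e2 : fderiv ℝ (fun y => fderiv ℝ φ y + C • fderiv ℝ (qd x) y) y
      = fderiv ℝ (fderiv ℝ φ) y + C • fderiv ℝ (fderiv ℝ (qd x)) y :=
    ((((diff1 hφ).differentiable (by norm_num)) y).hasFDerivAt.add
      ((((diff1 (contDiff_qd x)).differentiable (by norm_num)) y).hasFDerivAt.const_smul C)).fderiv
  unfold Lop TT
  rw [e1, e2, fderiv2_qd]
  simp only [_root_.add_apply, _root_.smul_apply, Dq_apply, Finset.sum_add_distrib, smul_eq_mul,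
    Finset.mul_sum]
  congr 1
  apply Finset.sum_congr rfl; intro k _
  apply Finset.sum_congr rfl; intro i _
  ring

theorem core_step {d : ℕ} (hd : 0 < d) (b : Fin d → (Fin d → ℝ)) (h : ℝ)
    {U φ : (Fin d → ℝ) → ℝ} (hU : Continuous U) (hφ : ContDiff ℝ 2 φ)
    {C κ m m' e R : ℝ} (hC : 0 < C) (hR : 0 < R) (x1 : Fin d → ℝ)
    (hφU : ∀ x, |φ x - U x| ≤ κ)
    (hcons : ∀ x, |Sop b h φ x - φ x - (h ^ 2 / (2 * d)) * Sop b h (Lop b φ) x| ≤ (h ^ 2 / (2 * d)) * e)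
    (n : ℕ) (hA : ∀ k ≤ n, ∀ x, |((Sop b h) ^ k) U x - U x| ≤ C * R ^ 2 / 2)
    (ht : n * (h ^ 2 / (2 * d)) * |m'| ≤ C * R ^ 2 / 2)
    (hv : ∀ χ : (Fin d → ℝ) → ℝ, ContDiff ℝ 2 χ → ∀ x ∈ Metric.ball x1 R,
      IsLocalMax (fun y => U y - χ y) x → m ≤ Lop b χ x)
    (hm' : m' ≤ m - 2 * C * TT b - e) :
    ∀ k ≤ n, ∀ x ∈ Metric.closedBall x1 R,
      U x + k * (h ^ 2 / (2 * d)) * m' - ((Sop b h) ^ k) φ x - C * qd x1 x ≤ κ := by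
  set τ := h ^ 2 / (2 * (d : ℝ)) with hτd
  have τ0 : 0 ≤ τ := by positivity
  have hSd : ∀ k x, |((Sop b h) ^ k) φ x - ((Sop b h) ^ k) U x| ≤ κ := by
    intro k x
    have := Spow_abs_le hd b h k (g := φ - U) (c := κ) hφU x
    rwa [map_sub] at this
  intro k
  induction k with
  | zero =>
    intro _ x _
    have := (abs_le.1 (hφU x)).1
    have h2 := mul_nonneg hC.le (qd_nonneg x1 x)
    simp
    linarith
  | succ k ih =>
    intro hk
    have hc1 : Continuous (((Sop b h) ^ (k + 1)) φ) := (contDiff_Spow b h hφ (k + 1)).continuous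
    have hc2 : Continuous (qd x1) := (contDiff_qd x1).continuous
    obtain ⟨x0, hx0, hmax⟩ := (isCompact_closedBall x1 R).exists_isMaxOn
      (Metric.nonempty_closedBall.2 hR.le)
      (f := fun x => U x - (((Sop b h) ^ (k + 1)) φ x + C * qd x1 x)) (by fun_prop)
    suffices hx : U x0 + (k + 1 : ℕ) * τ * m' - ((Sop b h) ^ (k + 1)) φ x0 - C * qd x1 x0 ≤ κ by
      intro x hx'
      have := hmax hx'
      simp only [Set.mem_ofPred_eq] at this
      linarith
    by_cases hb : dist x0 x1 < R
    · have hlm : IsLocalMax (fun x => U x - (((Sop b h) ^ (k + 1)) φ x + C * qd x1 x)) x0 :=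
        hmax.isLocalMax (Filter.mem_of_superset (Metric.isOpen_ball.mem_nhds hb) Metric.ball_subset_closedBall)
      have h1 := hv _ ((contDiff_Spow b h hφ (k + 1)).add (contDiff_const.mul (contDiff_qd x1))) x0 hb hlm
      rw [Lop_qd b (contDiff_Spow b h hφ (k + 1)), Lop_Spow b h hφ, Spow_succ'] at h1
      have h2 := Spow_abs_le hd b h k (g := Sop b h φ - φ - τ • Sop b h (Lop b φ)) (c := τ * e) hcons x0
      rw [map_sub, map_sub, map_smul, ← Spow_succ'] at h2
      simp only [Pi.sub_apply, Pi.smul_apply, smul_eq_mul] at h2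
      have h3 := ih (by omega) x0 hx0
      have h4 := (abs_le.1 h2).1
      have h5 : τ * m' ≤ τ * (((Sop b h) ^ k) (Sop b h (Lop b φ)) x0 - e) := by
        gcongr
        linarith
      push_cast
      linarith
    · have h1 := qd_ge x1 x0 hR (not_lt.1 hb)
      have h2 := (abs_le.1 (hA (k + 1) hk x0)).1
      have h3 := (abs_le.1 (hSd (k + 1) x0)).1
      have h4 : C * R ^ 2 ≤ C * qd x1 x0 := by gcongr
      have h5 : ((k + 1 : ℕ) : ℝ) * τ * m' ≤ n * τ * |m'| := by
        calc ((k + 1 : ℕ) : ℝ) * τ * m' ≤ ((k + 1 : ℕ) : ℝ) * τ * |m'| := by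
              gcongr; exact le_abs_self _
          _ ≤ _ := by gcongr
      linarith

open MeasureTheory

/-- mollification -/
noncomputable def moll {d : ℕ} (η : ContDiffBump (0 : Fin d → ℝ)) (U : (Fin d → ℝ) → ℝ)
    (x : Fin d → ℝ) : ℝ := ∫ t, η.normed volume t * U (x - t)

theorem moll_eq {d : ℕ} (η : ContDiffBump (0 : Fin d → ℝ)) (U : (Fin d → ℝ) → ℝ) :
    moll η U = MeasureTheory.convolution (η.normed volume) U (ContinuousLinearMap.lsmul ℝ ℝ) volume := rfl

theorem moll_contDiff {d : ℕ} (η : ContDiffBump (0 : Fin d → ℝ)) {U : (Fin d → ℝ) → ℝ}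
    (hU : Continuous U) : ContDiff ℝ 2 (moll η U) := by
  rw [moll_eq]
  exact η.hasCompactSupport_normed.contDiff_convolution_left (n := 2) _ η.contDiff_normed
    hU.locallyIntegrable

theorem moll_supp {d : ℕ} (η : ContDiffBump (0 : Fin d → ℝ)) {U : (Fin d → ℝ) → ℝ}
    (hs : HasCompactSupport U) : HasCompactSupport (moll η U) := by
  rw [moll_eq]
  exact η.hasCompactSupport_normed.convolution _ hs

theorem moll_int {d : ℕ} (η : ContDiffBump (0 : Fin d → ℝ)) {U : (Fin d → ℝ) → ℝ}
    (hU : Continuous U) (x) : Integrable (fun t => η.normed volume t * U (x - t)) := by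
  have c1 : Continuous (η.normed (volume : Measure (Fin d → ℝ))) := η.continuous_normed
  apply Continuous.integrable_of_hasCompactSupport (by fun_prop)
  exact η.hasCompactSupport_normed.mul_right

theorem moll_close {d : ℕ} {U : (Fin d → ℝ) → ℝ} (hU : Continuous U) (hs : HasCompactSupport U)
    {κ : ℝ} (hκ : 0 < κ) : ∃ r > 0, ∀ η : ContDiffBump (0 : Fin d → ℝ), η.rOut ≤ r →
      ∀ x, |moll η U x - U x| ≤ κ := by
  obtain ⟨δ, hδ, hu⟩ := Metric.uniformContinuous_iff.1 (cs_uc hU hs) κ hκ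
  refine ⟨δ, hδ, fun η hη x => ?_⟩
  rw [moll_eq, ← Real.dist_eq]
  apply ContDiffBump.dist_normed_convolution_le hU.aestronglyMeasurable
  intro y hy
  exact (hu (lt_of_lt_of_le hy hη)).le

theorem Sop_moll {d : ℕ} (b : Fin d → (Fin d → ℝ)) (h : ℝ) (η : ContDiffBump (0 : Fin d → ℝ))
    {U : (Fin d → ℝ) → ℝ} (hU : Continuous U) : Sop b h (moll η U) = moll η (Sop b h U) := by
  funext x
  simp only [Sop_apply, moll, smul_eq_mul]
  have e : ∀ t, η.normed volume t * (1 / (2 * (d : ℝ)) * ∑ k, (U (x - t + h • b k) + U (x - t - h • b k)))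
    = 1 / (2 * (d : ℝ)) * ∑ k, (η.normed volume t * U (x + h • b k - t) + η.normed volume t * U (x - h • b k - t)) := by
    intro t
    simp only [Finset.mul_sum]
    apply Finset.sum_congr rfl
    intro k _
    rw [show x - t + h • b k = x + h • b k - t by abel, show x - t - h • b k = x - h • b k - t by abel]
    ring
  simp only [e]
  rw [integral_const_mul, integral_finsetSum]
  · congr 1
    apply Finset.sum_congr rfl
    intro k _
    rw [integral_add (moll_int η hU _) (moll_int η hU _)]
  · intro k _
    exact (moll_int η hU _).add (moll_int η hU _)

theorem cont_Sop {d : ℕ} (b : Fin d → (Fin d → ℝ)) (h : ℝ) {g : (Fin d → ℝ) → ℝ}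
    (hg : Continuous g) : Continuous (Sop b h g) := by
  change Continuous (fun x => (1 / (2 * d) : ℝ) • ∑ k, (g (x + h • b k) + g (x - h • b k)))
  fun_prop

theorem cont_Spow {d : ℕ} (b : Fin d → (Fin d → ℝ)) (h : ℝ) {g : (Fin d → ℝ) → ℝ}
    (hg : Continuous g) (n : ℕ) : Continuous (((Sop b h) ^ n) g) := by
  induction n with
  | zero => simpa using hg
  | succ n ih => rw [Spow_succ]; exact cont_Sop b h ih

theorem Spow_moll {d : ℕ} (b : Fin d → (Fin d → ℝ)) (h : ℝ) (η : ContDiffBump (0 : Fin d → ℝ))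
    {U : (Fin d → ℝ) → ℝ} (hU : Continuous U) (n : ℕ) :
    ((Sop b h) ^ n) (moll η U) = moll η (((Sop b h) ^ n) U) := by
  induction n with
  | zero => simp
  | succ n ih => rw [Spow_succ, ih, Sop_moll b h η (cont_Spow b h hU n), Spow_succ]

theorem moll_le {d : ℕ} (η : ContDiffBump (0 : Fin d → ℝ)) {U V : (Fin d → ℝ) → ℝ}
    (hU : Continuous U) (hV : Continuous V) {z : Fin d → ℝ} {c : ℝ}
    (hle : ∀ x ∈ Metric.ball z η.rOut, U x ≤ V x + c) : moll η U z ≤ moll η V z + c := by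
  have e : moll η (fun x => V x + c) z = moll η V z + c := by
    unfold moll
    have i2 : Integrable (fun t => η.normed (volume : Measure (Fin d → ℝ)) t * c) :=
      η.integrable_normed.mul_const c
    simp only [mul_add]
    rw [integral_add (moll_int η hV z) i2]
    have := η.integral_normed_smul (volume : Measure (Fin d → ℝ)) c
    simp only [smul_eq_mul] at this
    rw [this]
  rw [← e]
  apply integral_mono (moll_int η hU z) (moll_int η (hV.add continuous_const) z)
  intro t
  by_cases ht : t ∈ Function.support (η.normed (volume : Measure (Fin d → ℝ)))
  · rw [η.support_normed_eq] at ht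
    apply mul_le_mul_of_nonneg_left (hle _ _) (η.nonneg_normed t)
    simpa [dist_eq_norm] using ht
  · have : η.normed (volume : Measure (Fin d → ℝ)) t = 0 := by simpa using ht
    simp [this]

theorem Spow_telescope {d : ℕ} (hd : 0 < d) (b : Fin d → (Fin d → ℝ)) (h : ℝ)
    {ψ : (Fin d → ℝ) → ℝ} {e : ℝ} (z : Fin d → ℝ)
    (hcons : ∀ x, |Sop b h ψ x - ψ x - (h ^ 2 / (2 * d)) * Lop b ψ x| ≤ (h ^ 2 / (2 * d)) * e)
    (n : ℕ) (hA : ∀ k ≤ n, |((Sop b h) ^ k) (Lop b ψ) z - Lop b ψ z| ≤ e) :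
    ((Sop b h) ^ n) ψ z ≤ ψ z + n * (h ^ 2 / (2 * d)) * (Lop b ψ z + 2 * e) := by
  set τ := h ^ 2 / (2 * (d : ℝ)) with hτd
  have τ0 : 0 ≤ τ := by positivity
  induction n with
  | zero => simp
  | succ n ih =>
    have h1 := ih (fun k hk => hA k (by omega))
    have h2 := Spow_abs_le hd b h n (g := Sop b h ψ - ψ - τ • Lop b ψ) (c := τ * e) hcons z
    rw [map_sub, map_sub, map_smul, ← Spow_succ'] at h2
    simp only [Pi.sub_apply, Pi.smul_apply, smul_eq_mul] at h2
    have h3 := (abs_le.1 (hA n (by omega))).2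
    have h4 := (abs_le.1 h2).2
    have h5 : τ * ((Sop b h) ^ n) (Lop b ψ) z ≤ τ * (Lop b ψ z + e) := by
      gcongr
      linarith
    push_cast
    linarith

theorem lin_moll {d : ℕ} (hd : 0 < d) (b : Fin d → (Fin d → ℝ))
    {U : (Fin d → ℝ) → ℝ} (hU : Continuous U) (hs : HasCompactSupport U)
    (η : ContDiffBump (0 : Fin d → ℝ)) {z : Fin d → ℝ} {m : ℝ}
    (hv : ∀ χ : (Fin d → ℝ) → ℝ, ContDiff ℝ 2 χ → ∀ x ∈ Metric.ball z (2 * η.rOut),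
      IsLocalMax (fun y => U y - χ y) x → m ≤ Lop b χ x) :
    m ≤ Lop b (moll η U) z := by
  have hd' : (0 : ℝ) < d := by exact_mod_cast hd
  have hT := TT_nonneg b
  have hR : 0 < η.rOut := η.rOut_pos
  set R := η.rOut with hRd
  suffices hE : ∀ e > 0, m ≤ Lop b (moll η U) z + (2 * TT b + 4) * e by
    refine le_of_forall_pos_le_add fun ε hε => ?_
    have := hE (ε / (2 * TT b + 4)) (by positivity)
    rwa [mul_div_cancel₀ _ (by positivity)] at this
  intro e he
  set ψ := moll η U with hψ
  have ψc : ContDiff ℝ 2 ψ := moll_contDiff η hU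
  have ψs : HasCompactSupport ψ := moll_supp η hs
  set m' := m - 2 * e * TT b - e with hm'
  obtain ⟨t₁, t₁0, HA1⟩ := lemA hd b hU hs (e := e * R ^ 2 / 2) (by positivity)
  obtain ⟨t₂, t₂0, HA2⟩ := lemA hd b (Lop_cont b ψc) (Lop_supp b ψs) he
  set t := min (min t₁ t₂) (e * R ^ 2 / 2 / (|m'| + 1)) with htd
  have t0 : 0 < t := by positivity
  set κ := e * t / 2 with hκ
  have κ0 : 0 < κ := by positivity
  obtain ⟨r, r0, hr⟩ := moll_close hU hs κ0
  let ζ : ContDiffBump (0 : Fin d → ℝ) := ⟨r / 2, r, by positivity, by linarith⟩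
  set φ := moll ζ U with hφ
  have φc : ContDiff ℝ 2 φ := moll_contDiff ζ hU
  have φs : HasCompactSupport φ := moll_supp ζ hs
  have hφU : ∀ x, |φ x - U x| ≤ κ := hr ζ le_rfl
  obtain ⟨h₁, h₁0, H1⟩ := consist2 hd b φc φs he
  obtain ⟨h₂, h₂0, H2⟩ := consist hd b ψc ψs he
  obtain ⟨n, hn⟩ := exists_nat_gt (2 * d * t / (min h₁ h₂) ^ 2)
  have n0 : (0 : ℝ) < n := lt_of_le_of_lt (by positivity) hn
  set h := Real.sqrt (2 * d * t / n) with hh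
  have h0 : 0 < h := by positivity
  have hsq : h ^ 2 = 2 * d * t / n := Real.sq_sqrt (by positivity)
  have hlt : h < min h₁ h₂ := by
    have hmin : 0 < min h₁ h₂ := by positivity
    apply lt_of_pow_lt_pow_left₀ 2 hmin.le
    rw [hsq, div_lt_iff₀ n0]
    rw [div_lt_iff₀ (by positivity)] at hn
    linarith
  have hnτ : n * (h ^ 2 / (2 * d)) = t := by
    rw [hsq]; field_simp
  have hkτ : ∀ k ≤ n, (k : ℝ) * (h ^ 2 / (2 * d)) ≤ t := by
    intro k hk
    rw [← hnτ]
    gcongr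
  have hpt : ∀ x ∈ Metric.ball z R, U x ≤ ((Sop b h) ^ n) U x + (2 * κ - t * m') := by
    intro x hx
    have := core_step hd b h hU φc (C := e) (m := m) (m' := m') he hR x hφU
      (H1 h h0 (hlt.trans_le (min_le_left _ _))) n
      (fun k hk y => HA1 h k ((hkτ k hk).trans ((min_le_left _ _).trans (min_le_left _ _))) y)
      (by
        rw [hnτ]
        calc t * |m'| ≤ (e * R ^ 2 / 2 / (|m'| + 1)) * (|m'| + 1) := by
              gcongr
              · exact min_le_right _ _
              · linarith
          _ = _ := by field_simp)
      (fun χ hχ y hy hl => hv χ hχ y (by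
        rw [Metric.mem_ball] at *
        linarith [dist_triangle y x z]) hl) le_rfl n le_rfl x (Metric.mem_closedBall_self hR.le)
    rw [hnτ, qd_self] at this
    have h2 := Spow_abs_le hd b h n (g := φ - U) (c := κ) hφU x
    rw [map_sub] at h2
    have h3 := (abs_le.1 h2).2
    simp only [Pi.sub_apply] at h3
    linarith
  have hm := moll_le η hU (cont_Spow b h hU n) hpt
  rw [← Spow_moll b h η hU, ← hψ] at hm
  have htel := Spow_telescope hd b h z (H2 h h0 (hlt.trans_le (min_le_right _ _))) n
    (fun k hk => HA2 h k ((hkτ k hk).trans ((min_le_left _ _).trans (min_le_right _ _))) z)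
  rw [hnτ] at htel
  have hfin : t * m' ≤ t * (Lop b ψ z + 3 * e) := by
    rw [hκ] at hm
    linarith
  have := le_of_mul_le_mul_left hfin t0
  linarith

open scoped MatrixOrder Matrix.Norms.L2Operator in
theorem psd_factor {d : ℕ} {B : Matrix (Fin d) (Fin d) ℝ} (hB : B.PosSemidef) :
    ∃ Q : Matrix (Fin d) (Fin d) ℝ, B = Qᵀ * Q := by
  obtain ⟨Q, hQ⟩ := CStarAlgebra.nonneg_iff_eq_star_mul_self.mp hB.nonneg
  refine ⟨Q, ?_⟩
  rw [hQ, Matrix.star_eq_conjTranspose, Matrix.conjTranspose_eq_transpose_of_trivial]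

theorem fac_apply {d : ℕ} (Q : Matrix (Fin d) (Fin d) ℝ) (i j : Fin d) :
    (Qᵀ * Q) i j = ∑ k, Q k i * Q k j := by
  simp [Matrix.mul_apply]

theorem fac_trace {d : ℕ} (Q : Matrix (Fin d) (Fin d) ℝ) : (Qᵀ * Q).trace = TT (fun k => Q k) := by
  unfold TT
  simp only [Matrix.trace, Matrix.diag, fac_apply]
  rw [Finset.sum_comm]
  simp [sq]

theorem trace_hess {d : ℕ} (Q : Matrix (Fin d) (Fin d) ℝ) (φ : (Fin d → ℝ) → ℝ) (x : Fin d → ℝ) :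
    ((Qᵀ * Q) * hessianM d φ x).trace = Lop (fun k => Q k) φ x := by
  have key : ∀ v w : Fin d → ℝ, fderiv ℝ (fderiv ℝ φ) x v w
      = ∑ i, ∑ j, v i * w j * hessianM d φ x i j := by
    intro v w
    simp only [hessianM, iteratedFDeriv_two_apply]
    conv_lhs => rw [pi_eq_sum_univ' v, pi_eq_sum_univ' w]
    simp only [map_sum, map_smul, _root_.sum_apply, _root_.smul_apply, smul_eq_mul, Finset.mul_sum]
    rw [Finset.sum_comm]
    apply Finset.sum_congr rfl; intro i _
    apply Finset.sum_congr rfl; intro j _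
    simp
    ring
  unfold Lop
  simp only [key, Matrix.trace, Matrix.diag]
  simp only [Matrix.mul_apply (N := hessianM d φ x), fac_apply, Finset.sum_mul]
  rw [Finset.sum_comm]
  have : ∀ y : Fin d, ∑ x_1 : Fin d, ∑ i : Fin d, Q i x_1 * Q i y * hessianM d φ x y x_1
     = ∑ i : Fin d, ∑ x_1 : Fin d, Q i y * Q i x_1 * hessianM d φ x y x_1 := by
    intro y
    rw [Finset.sum_comm]
    apply Finset.sum_congr rfl; intro i _
    apply Finset.sum_congr rfl; intro j _
    ring
  simp only [this]
  rw [Finset.sum_comm]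

theorem S1_entry {d : ℕ} {B : Matrix (Fin d) (Fin d) ℝ} (hB : B ∈ S1set d) (i j : Fin d) :
    |B i j| ≤ 1 := by
  obtain ⟨hp, ht⟩ := hB
  obtain ⟨Q, rfl⟩ := psd_factor hp
  have hdiag : ∀ i, ∑ k, (Q k i) ^ 2 ≤ 1 := by
    intro i
    rw [← ht, fac_trace, TT, Finset.sum_comm]
    exact Finset.single_le_sum (f := fun i => ∑ k, (Q k i) ^ 2)
      (fun i _ => by positivity) (Finset.mem_univ i)
  rw [fac_apply]
  calc |∑ k, Q k i * Q k j| ≤ ∑ k, ((Q k i) ^ 2 + (Q k j) ^ 2) / 2 := by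
        refine (Finset.abs_sum_le_sum_abs _ _).trans (Finset.sum_le_sum fun k _ => ?_)
        rw [abs_le]
        constructor <;> nlinarith [sq_nonneg (Q k i + Q k j), sq_nonneg (Q k i - Q k j)]
    _ = (∑ k, (Q k i) ^ 2 + ∑ k, (Q k j) ^ 2) / 2 := by
        rw [← Finset.sum_add_distrib, Finset.sum_div]
    _ ≤ 1 := by linarith [hdiag i, hdiag j]

theorem S1_det {d : ℕ} {B : Matrix (Fin d) (Fin d) ℝ} (hB : B ∈ S1set d) :
    0 ≤ B.det ^ ((1 : ℝ) / d) ∧ B.det ^ ((1 : ℝ) / d) ≤ 1 := by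
  obtain ⟨hp, ht⟩ := hB
  have h0 := hp.det_nonneg
  refine ⟨by positivity, ?_⟩
  apply Real.rpow_le_one h0 _ (by positivity)
  rw [hp.1.det_eq_prod_eigenvalues]
  apply Finset.prod_le_one
  · intro i _
    exact hp.eigenvalues_nonneg i
  · intro i _
    have h1 := hp.1.trace_eq_sum_eigenvalues
    rw [ht] at h1
    have h2 := Finset.single_le_sum (f := fun i => hp.1.eigenvalues i)
      (fun i _ => hp.eigenvalues_nonneg i) (Finset.mem_univ i)
    simp only [RCLike.ofReal_real_eq_id, id_eq] at h1 ⊢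
    linarith

theorem S1_nonempty {d : ℕ} (hd : 0 < d) : (S1set d).Nonempty := by
  have hd' : (0 : ℝ) < d := by exact_mod_cast hd
  refine ⟨(1 / d : ℝ) • (1 : Matrix (Fin d) (Fin d) ℝ), ?_, ?_⟩
  · exact Matrix.PosSemidef.one.smul (by positivity)
  · simp [Matrix.trace_smul]
    field_simp

theorem bval_le_bellman {d : ℕ} (A : Matrix (Fin d) (Fin d) ℝ) (f : ℝ)
    {B : Matrix (Fin d) (Fin d) ℝ} (hB : B ∈ S1set d) : bval d A B f ≤ bellman d A f := by
  apply le_csSup _ (mem_image_of_mem _ hB)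
  refine ⟨(∑ i, ∑ j, |A j i|) + |f|, ?_⟩
  rintro _ ⟨B, hB, rfl⟩
  simp only [bval]
  have h1 : -(B * A).trace ≤ ∑ i, ∑ j, |A j i| := by
    refine (neg_le_abs _).trans ?_
    simp only [Matrix.trace, Matrix.diag, Matrix.mul_apply]
    refine (Finset.abs_sum_le_sum_abs _ _).trans (Finset.sum_le_sum fun i _ => ?_)
    refine (Finset.abs_sum_le_sum_abs _ _).trans (Finset.sum_le_sum fun j _ => ?_)
    rw [abs_mul]
    exact mul_le_of_le_one_left (abs_nonneg _) (S1_entry hB i j)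
  have h2 : f * B.det ^ ((1 : ℝ) / d) ≤ |f| := by
    obtain ⟨h3, h4⟩ := S1_det hB
    calc f * B.det ^ ((1 : ℝ) / d) ≤ |f| * 1 := by
          gcongr
          exact le_abs_self f
      _ = |f| := mul_one _
  linarith

theorem cs_extend {d : ℕ} {K : Set (Fin d → ℝ)} (hK : IsCompact K) {u : (Fin d → ℝ) → ℝ}
    (hu : ContinuousOn u K) : ∃ U : (Fin d → ℝ) → ℝ, Continuous U ∧ HasCompactSupport U ∧
      ∀ x ∈ K, U x = u x := by
  obtain ⟨G, hG⟩ := ContinuousMap.exists_restrict_eq hK.isClosed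
    (⟨K.domRestrict u, hu.domRestrict⟩ : C(K, ℝ))
  obtain ⟨χ, h1, -, h3, -⟩ := exists_continuous_one_zero_of_isCompact hK isClosed_empty
    (disjoint_empty K)
  refine ⟨fun x => χ x * G x, by fun_prop, h3.mul_right, fun x hx => ?_⟩
  have e1 := congrArg (fun F : C(K, ℝ) => F ⟨x, hx⟩) hG
  have e2 : G x = u x := e1
  simp [h1 hx, e2]

theorem compar {d : ℕ} (hd : 0 < d) (Ω : Set (Fin d → ℝ)) (hΩo : IsOpen Ω)
    (hΩb : Bornology.IsBounded Ω)
    (f : (Fin d → ℝ) → ℝ) (hfc : ContinuousOn f (closure Ω))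
    (u₁ u₂ : (Fin d → ℝ) → ℝ)
    (hc₁ : ContinuousOn u₁ (closure Ω))
    (hsub₁ : ∀ φ : (Fin d → ℝ) → ℝ, ContDiffOn ℝ 2 φ Ω →
      ∀ x ∈ Ω, IsLocalMaxOn (fun y => u₁ y - φ y) Ω x →
        bellman d (hessianM d φ x) (f x) ≤ 0)
    (hc₂ : ContinuousOn u₂ (closure Ω))
    (hsup₂ : ∀ φ : (Fin d → ℝ) → ℝ, ContDiffOn ℝ 2 φ Ω →
      ∀ x ∈ Ω, IsLocalMinOn (fun y => u₂ y - φ y) Ω x →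
        0 ≤ bellman d (hessianM d φ x) (f x))
    (hbd : ∀ x ∈ frontier Ω, u₁ x ≤ u₂ x) :
    ∀ x ∈ closure Ω, u₁ x ≤ u₂ x := by
  by_contra hcon
  push Not at hcon
  obtain ⟨xs, hxs, hlt⟩ := hcon
  have hKc : IsCompact (closure Ω) := hΩb.isCompact_closure
  set θ := (u₁ xs - u₂ xs) / 3 with hθ
  have θ0 : 0 < θ := by linarith
  obtain ⟨U, hU, hs, hUu⟩ := cs_extend hKc hc₁
  -- the compact superlevel set
  set K := closure Ω ∩ {x | θ ≤ u₁ x - u₂ x} with hKd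
  have hKcl : IsClosed K := (hc₁.sub hc₂).preimage_isClosed_of_isClosed isClosed_closure isClosed_Ici
  have hKcomp : IsCompact K := hKc.of_isClosed_subset hKcl inter_subset_left
  have hKΩ : K ⊆ Ω := by
    rintro x ⟨hx, hx2⟩
    by_contra hn
    have : x ∈ frontier Ω := by rw [hΩo.frontier_eq]; exact ⟨hx, hn⟩
    have h3 := hbd x this
    have hx3 : θ ≤ u₁ x - u₂ x := hx2
    linarith
  obtain ⟨ε₁, ε₁0, hε₁⟩ := hKcomp.exists_cthickening_subset_open hΩo hKΩ
  -- the quadratic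
  obtain ⟨M, hM⟩ := hKc.exists_bound_of_continuousOn (contDiff_qd (0 : Fin d → ℝ)).continuous.continuousOn
  set α := θ / 2 / (|M| + 1) with hα
  have α0 : 0 < α := by positivity
  have hαq : ∀ x ∈ closure Ω, α * qd 0 x ≤ θ / 2 := by
    intro x hx
    have h1 := hM x hx
    have h2 : qd 0 x ≤ |M| + 1 := by
      have := (le_abs_self _).trans h1
      linarith [le_abs_self M]
    calc α * qd 0 x ≤ α * (|M| + 1) := by gcongr
      _ = θ / 2 := by rw [hα]; field_simp
  -- modulus of continuity of f
  obtain ⟨ε₂, ε₂0, hε₂⟩ := Metric.uniformContinuousOn_iff.1 (hKc.uniformContinuousOn_of_continuous hfc) α α0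
  obtain ⟨ε₃, ε₃0, hε₃⟩ := moll_close hU hs (κ := θ / 4) (by positivity)
  set r := min (min ε₁ ε₂ / 2) ε₃ with hr
  have r0 : 0 < r := by positivity
  have hr1 : 2 * r ≤ min ε₁ ε₂ := by
    have : r ≤ min ε₁ ε₂ / 2 := min_le_left _ _
    linarith
  let η : ContDiffBump (0 : Fin d → ℝ) := ⟨r / 2, r, by positivity, by linarith⟩
  have hψU := hε₃ η (min_le_right _ _)
  set ψ := moll η U with hψ
  have ψc : ContDiff ℝ 2 ψ := moll_contDiff η hU
  set φ := fun y => ψ y + α * qd 0 y with hφ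
  have φc : ContDiff ℝ 2 φ := ψc.add (contDiff_const.mul (contDiff_qd 0))
  obtain ⟨x0, hx0, hmin⟩ := hKc.exists_isMinOn ⟨xs, hxs⟩ (hc₂.sub φc.continuous.continuousOn)
  have hx0K : x0 ∈ K := by
    refine ⟨hx0, ?_⟩
    by_contra hn
    have hn' : ¬ (θ ≤ u₁ x0 - u₂ x0) := hn
    have h1 : u₂ x0 - φ x0 ≤ u₂ xs - φ xs := hmin hxs
    simp only [hφ] at h1
    have h2 := (abs_le.1 (hψU x0)).2
    have h3 := (abs_le.1 (hψU xs)).1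
    rw [hUu x0 hx0] at h2
    rw [hUu xs hxs] at h3
    have h4 := hαq x0 hx0
    have h5 := mul_nonneg α0.le (qd_nonneg 0 xs)
    push Not at hn'
    linarith
  have hx0Ω := hKΩ hx0K
  have hge := hsup₂ φ φc.contDiffOn x0 hx0Ω
    ((hmin.on_subset subset_closure).localize)
  have hlt' : bellman d (hessianM d φ x0) (f x0) ≤ -α := by
    apply csSup_le ((S1_nonempty hd).image _)
    rintro _ ⟨B, hB, rfl⟩
    obtain ⟨hD0, hD1⟩ := S1_det hB
    simp only [bval]
    obtain ⟨Q, hQ⟩ := psd_factor hB.1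
    have hT : TT (fun k => Q k) = 1 := by rw [← fac_trace, ← hQ, hB.2]
    have hkey : (f x0 - α) * B.det ^ ((1 : ℝ) / d) ≤ Lop (fun k => Q k) ψ x0 := by
      apply lin_moll hd _ hU hs η
      intro χ hχ x hx hl
      have hx' : dist x x0 < 2 * r := hx
      have hxΩ : x ∈ Ω := by
        apply hε₁
        apply Metric.mem_cthickening_of_dist_le x x0 _ _ hx0K
        exact hx'.le.trans (hr1.trans (min_le_left _ _))
      have hl2 : IsLocalMaxOn (fun y => u₁ y - χ y) Ω x := by
        have h1 : IsLocalMaxOn (fun y => U y - χ y) Ω x := hl.on Ω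
        refine Filter.EventuallyEq.isMaxFilter_iff ?_ ?_ |>.1 h1
        · filter_upwards [self_mem_nhdsWithin] with y hy
          rw [hUu y (subset_closure hy)]
        · rw [hUu x (subset_closure hxΩ)]
      have h2 := hsub₁ χ hχ.contDiffOn x hxΩ hl2
      have h3 := (bval_le_bellman (hessianM d χ x) (f x) hB).trans h2
      simp only [bval] at h3
      rw [show (B * hessianM d χ x).trace = Lop (fun k => Q k) χ x by rw [hQ, trace_hess]] at h3
      have h4 := hε₂ x (subset_closure hxΩ) x0 hx0 (hx'.trans_le (hr1.trans (min_le_right _ _)))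
      rw [Real.dist_eq, abs_lt] at h4
      have h5 : (f x0 - α) * B.det ^ ((1 : ℝ) / d) ≤ f x * B.det ^ ((1 : ℝ) / d) := by
        gcongr
        linarith [h4.1]
      linarith
    have e1 : (B * hessianM d φ x0).trace = Lop (fun k => Q k) ψ x0 + 2 * α := by
      rw [show (B * hessianM d φ x0).trace = Lop (fun k => Q k) φ x0 by rw [hQ, trace_hess]]
      rw [hφ, Lop_qd _ ψc, hT, mul_one]
    rw [e1]
    have h6 : α * B.det ^ ((1 : ℝ) / d) ≤ α := mul_le_of_le_one_right α0.le hD1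
    linarith
  linarith

end Helpers

/-- Uniqueness: there is at most one continuous viscosity solution of the Bellman
equation with given pointwise Dirichlet boundary data g. -/
theorem stmt_13 (d : ℕ) (hd : 2 ≤ d) (Ω : Set (Fin d → ℝ)) (hΩo : IsOpen Ω)
    (hΩb : Bornology.IsBounded Ω)
    (f : (Fin d → ℝ) → ℝ) (hfc : ContinuousOn f (closure Ω))
    (hf0 : ∀ x ∈ closure Ω, 0 ≤ f x)
    (g : (Fin d → ℝ) → ℝ)
    (u₁ u₂ : (Fin d → ℝ) → ℝ)
    (hc₁ : ContinuousOn u₁ (closure Ω))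
    (hsub₁ : ∀ φ : (Fin d → ℝ) → ℝ, ContDiffOn ℝ 2 φ Ω →
      ∀ x ∈ Ω, IsLocalMaxOn (fun y => u₁ y - φ y) Ω x →
        bellman d (hessianM d φ x) (f x) ≤ 0)
    (hsup₁ : ∀ φ : (Fin d → ℝ) → ℝ, ContDiffOn ℝ 2 φ Ω →
      ∀ x ∈ Ω, IsLocalMinOn (fun y => u₁ y - φ y) Ω x →
        0 ≤ bellman d (hessianM d φ x) (f x))
    (hbd₁ : ∀ x ∈ frontier Ω, u₁ x = g x)
    (hc₂ : ContinuousOn u₂ (closure Ω))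
    (hsub₂ : ∀ φ : (Fin d → ℝ) → ℝ, ContDiffOn ℝ 2 φ Ω →
      ∀ x ∈ Ω, IsLocalMaxOn (fun y => u₂ y - φ y) Ω x →
        bellman d (hessianM d φ x) (f x) ≤ 0)
    (hsup₂ : ∀ φ : (Fin d → ℝ) → ℝ, ContDiffOn ℝ 2 φ Ω →
      ∀ x ∈ Ω, IsLocalMinOn (fun y => u₂ y - φ y) Ω x →
        0 ≤ bellman d (hessianM d φ x) (f x))
    (hbd₂ : ∀ x ∈ frontier Ω, u₂ x = g x) :
    ∀ x ∈ closure Ω, u₁ x = u₂ x := by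
  intro x hx
  have hd0 : 0 < d := by omega
  apply le_antisymm
  · exact compar hd0 Ω hΩo hΩb f hfc u₁ u₂ hc₁ hsub₁ hc₂ hsup₂
      (fun y hy => by rw [hbd₁ y hy, hbd₂ y hy]) x hx
  · exact compar hd0 Ω hΩo hΩb f hfc u₂ u₁ hc₂ hsub₂ hc₁ hsup₁
      (fun y hy => by rw [hbd₁ y hy, hbd₂ y hy]) x hx
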